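/- arXiv:2404.12181 — 6 statements merged into one kernel-verified Lean document; each statement's English description precedes it below -/
import Mathlib

section
/- Let l ∈ ℕ and for j ∈ ℕ let m_j denote the j-th moment of a standard real Gaussian, m_j = ∫_ℝ z^j dγ(z) where γ = N(0,1). Define the (l+1)×(l+1) real matrix A = (a_{k,i})_{0 ≤ k,i ≤ l} by a_{k,i} = ∑_{j=0}^{k} C(k,j) (−1)^j m_j i^{k−j}. Then det(A) = ∏_{0 ≤ k < i ≤ l} (i − k); in particular det(A) > 0 and A is invertible. -/
open MeasureTheory ProbabilityTheory

lemma aux_lower_degree (c : ℕ → ℝ) (k : ℕ) :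
    (∑ j ∈ Finset.range k, Polynomial.C (c (j + 1)) * Polynomial.X ^ (k - (j + 1))).degree
      < (k : WithBot ℕ) := by
  refine (Polynomial.degree_sum_le _ _).trans_lt ?_
  refine (Finset.sup_lt_iff (WithBot.bot_lt_coe k)).2 ?_
  intro j hj
  have hj' := Finset.mem_range.1 hj
  refine (Polynomial.degree_C_mul_X_pow_le _ _).trans_lt ?_
  exact WithBot.coe_lt_coe.2 (by omega : k - (j + 1) < k)

/-- the matrix `A` built from the Gaussian moments has determinant
`∏_{0 ≤ k < i ≤ l} (i - k)`; in particular it is positive and `A` is invertible. -/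
theorem stmt_0 (l : ℕ) :
    let m : ℕ → ℝ := fun j => ∫ z : ℝ, z ^ j ∂(gaussianReal 0 1)
    let A : Matrix (Fin (l + 1)) (Fin (l + 1)) ℝ := fun k i =>
      ∑ j ∈ Finset.range (k.val + 1),
        (Nat.choose k.val j : ℝ) * (-1) ^ j * m j * (i.val : ℝ) ^ (k.val - j)
    A.det = (∏ i : Fin (l + 1), ∏ k ∈ Finset.range i.val, ((i.val : ℝ) - (k : ℝ)))
      ∧ 0 < A.det ∧ IsUnit A.det := by
  intro m A
  have hm0 : m 0 = 1 := by simp [m]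
  let c : ℕ → ℕ → ℝ := fun k j => (Nat.choose k j : ℝ) * (-1) ^ j * m j
  let p : Fin (l + 1) → Polynomial ℝ := fun k => Polynomial.X ^ k.val +
    ∑ j ∈ Finset.range k.val, Polynomial.C (c k (j + 1)) * Polynomial.X ^ (k.val - (j + 1))
  have hmonic : ∀ k, (p k).Monic := fun k =>
    Polynomial.monic_X_pow_add (aux_lower_degree (c k) k)
  have hdeg : ∀ k, (p k).natDegree = k := fun k =>
    Polynomial.natDegree_eq_of_degree_eq_some (by
      simp only [p]
      rw [Polynomial.degree_add_eq_left_of_degree_lt]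
      · simp
      · simpa using aux_lower_degree (c k) k)
  have hdet : A.det = ∏ i : Fin (l + 1), ∏ k ∈ Finset.range i.val, ((i.val : ℝ) - (k : ℝ)) := by
    have h := Matrix.det_eval_matrixOfPolynomials_eq_det_vandermonde
      (fun i : Fin (l + 1) => (i.val : ℝ)) p hdeg hmonic
    have hA : A.transpose = Matrix.of (fun i j => (p j).eval ((i.val : ℝ))) := by
      ext i k
      change ∑ j ∈ Finset.range (k.val + 1),
        (Nat.choose k.val j : ℝ) * (-1) ^ j * m j * (i.val : ℝ) ^ (k.val - j)
          = (p k).eval (i.val : ℝ)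
      simp only [p]
      rw [Finset.sum_range_succ']
      simp [Polynomial.eval_finset_sum, hm0, c, add_comm]
    rw [← Matrix.det_transpose, hA, ← h, Matrix.det_vandermonde,
      Finset.prod_comm' (t' := Finset.univ) (s' := fun j => Finset.Iio j) (by simp)]
    refine Finset.prod_congr rfl fun i _ => ?_
    rw [← Nat.Iio_eq_range, ← Fin.map_valEmbedding_Iio, Finset.prod_map]
    rfl
  have hpos : 0 < A.det := by
    rw [hdet]
    refine Finset.prod_pos fun i _ => Finset.prod_pos fun k hk => ?_
    exact sub_pos.2 (by exact_mod_cast Finset.mem_range.1 hk)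
  exact ⟨hdet, hpos, hpos.ne'.isUnit⟩
end

section
/- Let l ∈ ℕ and for j ∈ ℕ let m_j denote the j-th moment of a standard real Gaussian, m_j = ∫_ℝ z^j dγ(z) where γ = N(0,1). Then there exists a unique vector u = (u_0, …, u_l) ∈ ℝ^{l+1} such that for every k ∈ {0,…,l}: ∑_{i=0}^{l} u_i ( ∑_{j=0}^{k} (−1)^j m_j i^{k−j} / (j! (k−j)!) ) equals 1 if k = 0 and equals 0 if 1 ≤ k ≤ l. -/
open MeasureTheory ProbabilityTheory

lemma aux_inj (l : ℕ) (m : ℕ → ℝ) (hm : m 0 = 1) (u : Fin (l + 1) → ℝ)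
    (h : ∀ k : Fin (l + 1),
      (∑ i : Fin (l + 1), u i *
        ∑ j ∈ Finset.range (k.val + 1),
          (-1 : ℝ) ^ j * m j * (i.val : ℝ) ^ (k.val - j) /
            ((Nat.factorial j : ℝ) * (Nat.factorial (k.val - j) : ℝ))) = 0) : u = 0 := by
  have key : ∀ k : ℕ, k < l + 1 → ∑ i : Fin (l + 1), u i * (i.val : ℝ) ^ k = 0 := by
    intro k
    induction k using Nat.strong_induction_on with
    | _ k ih =>
      intro hk
      have h1 := h ⟨k, hk⟩
      simp only [Finset.mul_sum] at h1
      rw [Finset.sum_comm, Finset.sum_range_succ'] at h1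
      rw [Finset.sum_eq_zero, zero_add] at h1
      · have h2 : (∑ i : Fin (l + 1), u i * (i.val : ℝ) ^ k) / (Nat.factorial k : ℝ) = 0 := by
          rw [Finset.sum_div, ← h1]
          refine Finset.sum_congr rfl fun i _ => ?_
          simp [hm, mul_div_assoc]
        have h3 : (Nat.factorial k : ℝ) ≠ 0 := by positivity
        exact (div_eq_zero_iff.mp h2).resolve_right h3
      · intro j hj
        have hj' := Finset.mem_range.mp hj
        have h4 := ih (k - (j + 1)) (by omega) (by omega)
        have h5 : ∀ i : Fin (l + 1), u i * ((-1 : ℝ) ^ (j + 1) * m (j + 1) *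
            (i.val : ℝ) ^ (k - (j + 1)) /
            ((Nat.factorial (j + 1) : ℝ) * (Nat.factorial (k - (j + 1)) : ℝ))) =
            ((-1 : ℝ) ^ (j + 1) * m (j + 1) /
            ((Nat.factorial (j + 1) : ℝ) * (Nat.factorial (k - (j + 1)) : ℝ))) *
            (u i * (i.val : ℝ) ^ (k - (j + 1))) := fun i => by ring
        rw [Finset.sum_congr rfl fun i _ => h5 i, ← Finset.mul_sum, h4, mul_zero]
  refine Matrix.eq_zero_of_forall_pow_sum_mul_pow_eq_zero
    (f := fun i : Fin (l + 1) => (i.val : ℝ)) ?_ fun k => key k k.2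
  intro a b hab
  exact Fin.ext (Nat.cast_injective (R := ℝ) hab)

/-- existence and uniqueness of the debiasing vector `u`. -/
theorem stmt_2 (l : ℕ) :
    let m : ℕ → ℝ := fun j => ∫ z : ℝ, z ^ j ∂(gaussianReal 0 1)
    ∃! u : Fin (l + 1) → ℝ, ∀ k : Fin (l + 1),
      (∑ i : Fin (l + 1), u i *
        ∑ j ∈ Finset.range (k.val + 1),
          (-1 : ℝ) ^ j * m j * (i.val : ℝ) ^ (k.val - j) /
            ((Nat.factorial j : ℝ) * (Nat.factorial (k.val - j) : ℝ))) =
      if k.val = 0 then 1 else 0 := by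
  intro m
  have hm : m 0 = 1 := by simp [m]
  let A : Matrix (Fin (l + 1)) (Fin (l + 1)) ℝ := fun i k =>
    ∑ j ∈ Finset.range (k.val + 1),
          (-1 : ℝ) ^ j * m j * (i.val : ℝ) ^ (k.val - j) /
            ((Nat.factorial j : ℝ) * (Nat.factorial (k.val - j) : ℝ))
  have hinj : Function.Injective A.vecMulLinear := by
    rw [← LinearMap.ker_eq_bot, LinearMap.ker_eq_bot']
    intro u hu
    exact aux_inj l m hm u fun k => congrFun hu k
  have hsurj := LinearMap.injective_iff_surjective.mp hinj
  obtain ⟨u, hu⟩ := hsurj fun k => if k.val = 0 then 1 else 0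
  refine ⟨u, fun k => congrFun hu k, fun v hv => hinj ?_⟩
  rw [hu]
  funext k
  exact hv k
end

section
/- Let d ≥ 1, and let V : ℝ^d → ℝ be differentiable with V(0) = 0 and V(x) ≥ V₀ for all x ∈ ℝ^d, where V₀ ∈ ℝ. Set b = −∇V and assume: (i) there exist b₀, b₁ > 0 with ‖b(x)‖ ≤ b₀ + b₁‖x‖ for all x ∈ ℝ^d; (ii) there exist C̃ > 0 and ρ̃ > 0 such that ⟨x, b(x)⟩ ≤ −C̃‖x‖ for all x with ‖x‖ ≥ ρ̃. Then there exists a constant M > 0, depending only on d, b₀, b₁, V₀, C̃ and ρ̃, such that ‖b(x)‖ · e^{−V(x)} ≤ M for all x ∈ ℝ^d. -/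
open MeasureTheory RealInnerProductSpace

lemma V_lower (d : ℕ) (V₀ Cb ρb : ℝ) (hCb : 0 < Cb) (hρb : 0 < ρb)
    (V : EuclideanSpace ℝ (Fin d) → ℝ)
    (hV : Differentiable ℝ V) (hV₀ : ∀ x, V₀ ≤ V x)
    (h : ∀ x, ρb ≤ ‖x‖ → ⟪x, -gradient V x⟫ ≤ -Cb * ‖x‖) (x : EuclideanSpace ℝ (Fin d)) :
    V₀ + Cb * (‖x‖ - ρb) ≤ V x := by
  by_cases hx : ‖x‖ < ρb
  · have := hV₀ x
    nlinarith
  push Not at hx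
  have hr : 0 < ‖x‖ := by linarith
  have hd : ∀ t : ℝ, HasDerivAt (fun t : ℝ => V (t • x) - Cb * ‖x‖ * t)
      (⟪gradient V (t • x), x⟫ - Cb * ‖x‖) t := by
    intro t
    have h1 : HasFDerivAt V _ (t • x) := (hV (t • x)).hasGradientAt.hasFDerivAt
    have h2 : HasDerivAt (fun t : ℝ => t • x) x t := by
      simpa using (hasDerivAt_id t).smul_const x
    have h3 := h1.comp_hasDerivAt t h2
    have h4 : HasDerivAt (fun t : ℝ => Cb * ‖x‖ * t) (Cb * ‖x‖) t := by
      simpa using (hasDerivAt_id t).const_mul (Cb * ‖x‖)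
    exact h3.sub h4
  have hle : ρb / ‖x‖ ≤ 1 := (div_le_one hr).2 hx
  have hm : MonotoneOn (fun t : ℝ => V (t • x) - Cb * ‖x‖ * t) (Set.Icc (ρb / ‖x‖) 1) := by
    apply monotoneOn_of_deriv_nonneg (convex_Icc _ _)
    · exact fun t _ => (hd t).continuousAt.continuousWithinAt
    · exact fun t _ => (hd t).differentiableAt.differentiableWithinAt
    · intro t ht
      rw [interior_Icc] at ht
      rw [(hd t).deriv]
      have ht0 : 0 < t := lt_trans (by positivity) ht.1
      have hn : ‖t • x‖ = t * ‖x‖ := by rw [norm_smul, Real.norm_of_nonneg ht0.le]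
      have h5 := h (t • x) (by rw [hn]; exact ((div_lt_iff₀ hr).1 ht.1).le)
      rw [hn, inner_neg_right, real_inner_smul_left, real_inner_comm] at h5
      have h6 : 0 ≤ t * (⟪gradient V (t • x), x⟫ - Cb * ‖x‖) := by linarith
      exact nonneg_of_mul_nonneg_right h6 ht0
  have h7 := hm (Set.left_mem_Icc.2 hle) (Set.right_mem_Icc.2 hle) hle
  have h8 : Cb * ‖x‖ * (ρb / ‖x‖) = Cb * ρb := by field_simp
  simp only [one_smul, h8] at h7
  have := hV₀ ((ρb / ‖x‖) • x)
  linarith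

/-- under the growth, lower-boundedness and dissipativity assumptions on
`V` and `b = -∇V`, the quantity `‖b(x)‖ e^{-V(x)}` is bounded by a constant `M`
depending only on `d, b₀, b₁, V₀, C̃, ρ̃`. -/
theorem stmt_3 (d : ℕ) (hd : 1 ≤ d) (b₀ b₁ V₀ Cb ρb : ℝ)
    (hb₀ : 0 < b₀) (hb₁ : 0 < b₁) (hCb : 0 < Cb) (hρb : 0 < ρb) :
    ∃ M > 0, ∀ V : EuclideanSpace ℝ (Fin d) → ℝ,
      Differentiable ℝ V → V 0 = 0 → (∀ x, V₀ ≤ V x) →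
      (∀ x, ‖-gradient V x‖ ≤ b₀ + b₁ * ‖x‖) →
      (∀ x, ρb ≤ ‖x‖ → ⟪x, -gradient V x⟫ ≤ -Cb * ‖x‖) →
      ∀ x, ‖-gradient V x‖ * Real.exp (-V x) ≤ M := by
  refine ⟨(b₀ + b₁ / Cb) * Real.exp (-V₀ + Cb * ρb), by positivity, ?_⟩
  intro V hV _ hV₀ hg h x
  have hl := V_lower d V₀ Cb ρb hCb hρb V hV hV₀ h x
  have hr := norm_nonneg x
  have h1 : b₀ + b₁ * ‖x‖ ≤ (b₀ + b₁ / Cb) * Real.exp (Cb * ‖x‖) := by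
    have e1 := Real.add_one_le_exp (Cb * ‖x‖)
    have e2 : 0 ≤ Cb * ‖x‖ := by positivity
    have e3 : b₀ * 1 ≤ b₀ * Real.exp (Cb * ‖x‖) := by gcongr; linarith
    have e4 : b₁ / Cb * (Cb * ‖x‖) ≤ b₁ / Cb * Real.exp (Cb * ‖x‖) := by gcongr; linarith
    have e5 : b₁ / Cb * (Cb * ‖x‖) = b₁ * ‖x‖ := by field_simp
    linarith
  calc ‖-gradient V x‖ * Real.exp (-V x)
      ≤ ((b₀ + b₁ / Cb) * Real.exp (Cb * ‖x‖)) * Real.exp (-V₀ + Cb * ρb - Cb * ‖x‖) := by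
        apply mul_le_mul ((hg x).trans h1) (Real.exp_le_exp.2 (by linarith)) (by positivity)
          (by positivity)
    _ = _ := by
        rw [mul_assoc, ← Real.exp_add]
        congr 2
        ring
end

section
/- Let r > 0 and let ν ≥ (2/r)^{1/r}. Then ∫_ν^∞ exp(−z^r) dz ≤ 2 r^{−1} ν^{1−r} exp(−ν^r). -/
open MeasureTheory

/-- Gaussian-type tail bound
`∫_ν^∞ exp(-z^r) dz ≤ 2 r⁻¹ ν^{1-r} exp(-ν^r)` for `ν ≥ (2/r)^{1/r}`. -/
theorem stmt_7 (r ν : ℝ) (hr : 0 < r) (hν : (2 / r) ^ (1 / r) ≤ ν) :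
    ∫ z in Set.Ici ν, Real.exp (-z ^ r) ≤ 2 * r⁻¹ * ν ^ (1 - r) * Real.exp (-ν ^ r) := by
  have h2r : 0 < 2 / r := by positivity
  have hν0 : 0 < ν := lt_of_lt_of_le (Real.rpow_pos_of_pos h2r _) hν
  have hder : ∀ z ∈ Set.Ici ν, HasDerivAt (fun z : ℝ => -(2 * r⁻¹ * (z ^ (1 - r) * Real.exp (-z ^ r))))
      (Real.exp (-z ^ r) * (2 - (1 - r) * (2 / r * (z ^ r)⁻¹))) z := by
    intro z hz
    have hz0 : 0 < z := lt_of_lt_of_le hν0 hz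
    have h1 := Real.hasDerivAt_rpow_const (x := z) (p := 1 - r) (Or.inl hz0.ne')
    have h2 := (Real.hasDerivAt_rpow_const (x := z) (p := r) (Or.inl hz0.ne')).neg.exp
    have h3 := ((h1.mul h2).const_mul (2 * r⁻¹)).neg
    refine h3.congr_deriv ?_
    have e1 : z ^ (1 - r - 1) = (z ^ r)⁻¹ := by
      rw [← Real.rpow_neg hz0.le]; congr 1; ring
    have e2 : z ^ (1 - r) * z ^ (r - 1) = 1 := by
      rw [← Real.rpow_add hz0]; simp
    simp only [Pi.neg_apply]
    rw [e1]
    have e3 : r⁻¹ * r = 1 := inv_mul_cancel₀ hr.ne'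
    linear_combination (2 * r⁻¹ * r * Real.exp (-z ^ r)) * e2 + 2 * Real.exp (-z ^ r) * e3
  have hge : ∀ z ∈ Set.Ici ν, Real.exp (-z ^ r) ≤
      Real.exp (-z ^ r) * (2 - (1 - r) * (2 / r * (z ^ r)⁻¹)) := by
    intro z hz
    have hz0 : 0 < z := lt_of_lt_of_le hν0 hz
    have hzr : 2 / r ≤ z ^ r := by
      have := Real.rpow_le_rpow (Real.rpow_pos_of_pos h2r _).le (hν.trans hz) hr.le
      rwa [← Real.rpow_mul h2r.le, one_div_mul_cancel hr.ne', Real.rpow_one] at this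
    have hp : 0 < z ^ r := Real.rpow_pos_of_pos hz0 r
    have ha : 2 / r * (z ^ r)⁻¹ ≤ 1 := by
      rw [← div_eq_mul_inv]; exact (div_le_one hp).2 hzr
    have hb : 0 < 2 / r * (z ^ r)⁻¹ := by positivity
    apply le_mul_of_one_le_right (Real.exp_pos _).le
    nlinarith [mul_pos hr hb]
  have hlim : Filter.Tendsto (fun z : ℝ => -(2 * r⁻¹ * (z ^ (1 - r) * Real.exp (-z ^ r))))
      Filter.atTop (nhds 0) := by
    have h := (tendsto_rpow_mul_exp_neg_mul_atTop_nhds_zero ((1 - r) / r) 1 one_pos).comp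
      (tendsto_rpow_atTop hr)
    have h' := (h.const_mul (2 * r⁻¹)).neg
    rw [mul_zero, neg_zero] at h'
    refine h'.congr' ?_
    filter_upwards [Filter.eventually_gt_atTop 0] with z hz
    simp only [Function.comp]
    rw [← Real.rpow_mul hz.le, mul_div_cancel₀ _ hr.ne', neg_one_mul]
  have hnn : ∀ z ∈ Set.Ioi ν, 0 ≤ Real.exp (-z ^ r) * (2 - (1 - r) * (2 / r * (z ^ r)⁻¹)) :=
    fun z hz => (Real.exp_pos _).le.trans (hge z (Set.Ioi_subset_Ici_self hz))
  have hint := integrableOn_Ioi_deriv_of_nonneg' hder hnn hlim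
  have hval := integral_Ioi_of_hasDerivAt_of_nonneg' hder hnn hlim
  rw [integral_Ici_eq_integral_Ioi]
  calc _ ≤ ∫ z in Set.Ioi ν, Real.exp (-z ^ r) * (2 - (1 - r) * (2 / r * (z ^ r)⁻¹)) := by
        refine integral_mono_of_nonneg (Filter.Eventually.of_forall fun z => (Real.exp_pos _).le) hint ?_
        exact (ae_restrict_mem measurableSet_Ioi).mono fun z hz => hge z (Set.Ioi_subset_Ici_self hz)
    _ = _ := by rw [hval]; ring
end

section
/- Let a, b, c, z > 0 and p > 0 be real numbers. Then exp( −a z^p / (b + c z^{p/2}) ) ≤ exp( −a z^p / (2b) ) + exp( −a z^{p/2} / (2c) ). -/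
/-- `exp(-a z^p / (b + c z^{p/2})) ≤ exp(-a z^p / (2b)) + exp(-a z^{p/2} / (2c))`. -/
theorem stmt_8 (a b c z p : ℝ) (ha : 0 < a) (hb : 0 < b) (hc : 0 < c) (hz : 0 < z)
    (hp : 0 < p) :
    Real.exp (-(a * z ^ p) / (b + c * z ^ (p / 2))) ≤
      Real.exp (-(a * z ^ p) / (2 * b)) + Real.exp (-(a * z ^ (p / 2)) / (2 * c)) := by
  have hw : 0 < z ^ (p / 2) := Real.rpow_pos_of_pos hz _
  have hzp : z ^ p = z ^ (p / 2) * z ^ (p / 2) := by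
    rw [← Real.rpow_add hz, add_halves]
  rw [hzp]
  generalize z ^ (p / 2) = w at hw
  have hcw : 0 < c * w := mul_pos hc hw
  have haw : 0 < a * w := mul_pos ha hw
  rcases le_total (c * w) b with h | h
  · have h1 : -(a * (w * w)) / (b + c * w) ≤ -(a * (w * w)) / (2 * b) := by
      rw [neg_div, neg_div, neg_le_neg_iff]
      apply div_le_div_of_nonneg_left (by positivity) (by positivity) (by linarith)
    have := Real.exp_le_exp.mpr h1
    have := Real.exp_pos (-(a * w) / (2 * c))
    linarith
  · have h1 : -(a * (w * w)) / (b + c * w) ≤ -(a * w) / (2 * c) := by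
      rw [neg_div, neg_div, neg_le_neg_iff, div_le_div_iff₀ (by positivity) (by positivity)]
      nlinarith [mul_le_mul_of_nonneg_left h haw.le]
    have := Real.exp_le_exp.mpr h1
    have := Real.exp_pos (-(a * (w * w)) / (2 * b))
    linarith
end

section
/- Let d ≥ 1, α = (α₁,…,α_d) ∈ (0,∞)^d, L = (L₁,…,L_d) ∈ (0,∞)^d, and let g : ℝ^d → ℝ belong to the anisotropic Hölder class H_d(α, L). Let K : ℝ → ℝ be a bounded measurable kernel with compact support such that ∫_ℝ K(y) dy = 1 and ∫_ℝ y^k K(y) dy = 0 for all 1 ≤ k ≤ l − 1, where l ∈ ℕ satisfies l ≥ ⌈α_i⌉ for every i. Then there exists a constant C > 0, depending only on d, α, L and K, such that for every x ∈ ℝ^d and every h = (h₁,…,h_d) ∈ (0,∞)^d: | ∫_{ℝ^d} ( ∏_{i=1}^d K(z_i) ) ( g(x − h⊙z) − g(x) ) dz | ≤ C ∑_{i=1}^{d} h_i^{α_i}, where h⊙z = (h₁z₁,…,h_dz_d). -/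
open MeasureTheory

/-- The iterated partial derivative `∂_i^k g (x)` of `g : ℝ^d → ℝ` in the direction of
the `i`-th canonical basis vector, defined as the `k`-th derivative at `0` of
`t ↦ g (x + t e_i)`. -/
noncomputable def partialDerivIter (d : ℕ) (g : (Fin d → ℝ) → ℝ) (i : Fin d) (k : ℕ)
    (x : Fin d → ℝ) : ℝ :=
  iteratedDeriv k (fun t : ℝ => g (x + t • (Pi.single i 1 : Fin d → ℝ))) 0

/-- `g : ℝ^d → ℝ` belongs to the anisotropic Hölder class `H_d(α, L)`. -/
def IsAnisotropicHolder (d : ℕ) (α L : Fin d → ℝ) (g : (Fin d → ℝ) → ℝ) : Prop :=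
  ∀ i : Fin d,
    (∀ x : Fin d → ℝ, ∀ k < ⌊α i⌋₊,
        Differentiable ℝ (iteratedDeriv k
          (fun t : ℝ => g (x + t • (Pi.single i 1 : Fin d → ℝ))))) ∧
    (∀ k ≤ ⌊α i⌋₊, ∀ x : Fin d → ℝ, |partialDerivIter d g i k x| ≤ L i) ∧
    (∀ (t : ℝ) (x : Fin d → ℝ),
        |partialDerivIter d g i ⌊α i⌋₊ (x + t • (Pi.single i 1 : Fin d → ℝ)) -
            partialDerivIter d g i ⌊α i⌋₊ x| ≤ L i * |t| ^ (α i - (⌊α i⌋₊ : ℝ)))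

/-- One-dimensional Taylor estimate. -/
lemma taylor_holder (n : ℕ) : ∀ (φ : ℝ → ℝ) (L β : ℝ), 0 < β →
    (∀ k < n, Differentiable ℝ (iteratedDeriv k φ)) →
    (∀ t, |iteratedDeriv n φ t - iteratedDeriv n φ 0| ≤ L * |t| ^ β) →
    ∃ c : ℕ → ℝ, ∀ s, |φ s - φ 0 - ∑ k ∈ Finset.range n, c k * s ^ (k+1)|
      ≤ L * |s| ^ ((n : ℝ) + β) := by
  induction n with
  | zero =>
    intro φ L β hβ _ h
    exact ⟨0, by simpa using h⟩
  | succ n ih =>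
    intro φ L β hβ hd h
    have hL : 0 ≤ L := by
      have := (abs_nonneg _).trans (h 1)
      simpa using this
    have hφ : Differentiable ℝ φ := by simpa using hd 0 (Nat.succ_pos n)
    obtain ⟨c, hc⟩ := ih (deriv φ) L β hβ
      (fun k hk => by
        have := hd (k+1) (by omega)
        rwa [iteratedDeriv_succ'] at this)
      (fun t => by
        have := h t
        rwa [iteratedDeriv_succ'] at this)
    refine ⟨fun k => if k = 0 then deriv φ 0 else c (k-1) / (k+1), fun s => ?_⟩
    set R : ℝ → ℝ := fun s => φ s - φ 0 - (∑ k ∈ Finset.range n, c k / (k+2) * s ^ (k+2)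
      + deriv φ 0 * s) with hR
    have e : φ s - φ 0 - ∑ k ∈ Finset.range (n+1),
        (if k = 0 then deriv φ 0 else c (k-1) / ((k:ℝ)+1)) * s ^ (k+1) = R s := by
      rw [Finset.sum_range_succ', hR]
      simp only [Nat.add_eq_zero_iff, one_ne_zero, and_false, if_false, Nat.add_sub_cancel]
      simp only [if_true, zero_add, pow_one]
      congr 2
      apply Finset.sum_congr rfl
      intro k _
      push_cast
      ring_nf
    rw [e]
    have hder : ∀ t, HasDerivAt R
        (deriv φ t - deriv φ 0 - ∑ k ∈ Finset.range n, c k * t ^ (k+1)) t := by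
      intro t
      have h1 : HasDerivAt (fun s : ℝ => ∑ k ∈ Finset.range n, c k / (k+2) * s ^ (k+2))
          (∑ k ∈ Finset.range n, c k * t ^ (k+1)) t := by
        apply HasDerivAt.fun_sum
        intro k _
        have := (hasDerivAt_pow (k+2) t).const_mul (c k / ((k:ℝ)+2))
        refine this.congr_deriv ?_
        have : (k:ℝ) + 2 ≠ 0 := by positivity
        push_cast
        field_simp
      have h2 := (hasDerivAt_id t).const_mul (deriv φ 0)
      refine (((hφ t).hasDerivAt.sub_const (φ 0)).sub (h1.add h2)).congr_deriv ?_
      ring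
    have R0 : R 0 = 0 := by simp [hR]
    have := Convex.norm_image_sub_le_of_norm_hasDerivWithin_le (f := R)
      (s := Metric.closedBall (0:ℝ) |s|) (x := 0) (y := s) (C := L * |s| ^ ((n:ℝ) + β))
      (fun t _ => (hder t).hasDerivWithinAt)
      (fun t ht => by
        rw [Real.norm_eq_abs]
        refine (hc t).trans ?_
        have : |t| ≤ |s| := by simpa using ht
        gcongr)
      (convex_closedBall _ _) (by simp) (by simp)
    rw [R0, sub_zero, sub_zero, Real.norm_eq_abs, Real.norm_eq_abs] at this
    refine this.trans (le_of_eq ?_)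
    have h3 : ((n+1 : ℕ) : ℝ) + β = ((n:ℝ) + β) + 1 := by push_cast; ring
    rw [h3, Real.rpow_add_one' (abs_nonneg s) (by positivity)]
    ring

lemma integrable_cont_mul (K : ℝ → ℝ) (hK : Integrable K) (hs : HasCompactSupport K)
    (f : ℝ → ℝ) (hf : Continuous f) : Integrable (fun y => f y * K y) := by
  have h1 : IntegrableOn (fun y => f y * K y) (tsupport K) :=
    hK.integrableOn.continuousOn_mul hf.continuousOn hs
  refine (integrableOn_iff_integrable_of_support_subset ?_).1 h1
  intro y hy
  apply subset_tsupport
  intro h0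
  apply hy
  simp [h0]

lemma kernel_one_dim (K : ℝ → ℝ) (hK : Integrable K) (hs : HasCompactSupport K) (n : ℕ)
    (hmom : ∀ k : ℕ, 1 ≤ k → k ≤ n → (∫ y : ℝ, y ^ k * K y) = 0)
    (φ : ℝ → ℝ) (hφ : Continuous φ) (L β a : ℝ) (hβ : 0 < β) (ha : (n : ℝ) + β = a)
    (hd : ∀ k < n, Differentiable ℝ (iteratedDeriv k φ))
    (hh : ∀ t, |iteratedDeriv n φ t - iteratedDeriv n φ 0| ≤ L * |t| ^ β)
    (h : ℝ) (hpos : 0 < h) :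
    |∫ y, K y * (φ (-(h * y)) - φ 0)| ≤ (L * ∫ y, |y| ^ a * |K y|) * h ^ a := by
  obtain ⟨c, hc⟩ := taylor_holder n φ L β hβ hd hh
  have ha0 : 0 < a := by rw [← ha]; positivity
  have i1 : Integrable (fun y => (φ (-(h * y)) - φ 0) * K y) :=
    integrable_cont_mul K hK hs _ (by fun_prop)
  have i2 : ∀ k, Integrable (fun y => y ^ k * K y) := fun k =>
    integrable_cont_mul K hK hs _ (by fun_prop)
  have z : ∫ y, ∑ k ∈ Finset.range n, (c k * (-h) ^ (k+1)) * (y ^ (k+1) * K y) = 0 := by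
    rw [integral_finsetSum _ (fun k _ => (i2 (k+1)).const_mul _)]
    apply Finset.sum_eq_zero
    intro k hk
    rw [integral_const_mul, hmom (k+1) (by omega) (by simpa using hk), mul_zero]
  have i3 : Integrable (fun y => ∑ k ∈ Finset.range n,
      (c k * (-h) ^ (k+1)) * (y ^ (k+1) * K y)) :=
    integrable_finsetSum _ (fun k _ => (i2 (k+1)).const_mul _)
  have e : ∫ y, K y * (φ (-(h * y)) - φ 0) = ∫ y, ((φ (-(h * y)) - φ 0) * K y -
      ∑ k ∈ Finset.range n, (c k * (-h) ^ (k+1)) * (y ^ (k+1) * K y)) := by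
    rw [integral_sub i1 i3, z, sub_zero]
    simp only [mul_comm]
  have i4 : Integrable (fun y => |y| ^ a * |K y|) :=
    integrable_cont_mul (fun y => |K y|) hK.abs (hs.comp_left (g := fun t => |t|) abs_zero) _
      (continuous_abs.rpow_const (fun _ => Or.inr ha0.le))
  rw [e, ← Real.norm_eq_abs]
  have := norm_integral_le_of_norm_le (i4.const_mul (L * h ^ a))
    (f := fun y => ((φ (-(h * y)) - φ 0) * K y -
      ∑ k ∈ Finset.range n, (c k * (-h) ^ (k+1)) * (y ^ (k+1) * K y)))
    (Filter.Eventually.of_forall fun y => by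
      have h1 : (φ (-(h * y)) - φ 0) * K y -
          ∑ k ∈ Finset.range n, (c k * (-h) ^ (k+1)) * (y ^ (k+1) * K y)
          = (φ (-(h * y)) - φ 0 - ∑ k ∈ Finset.range n, c k * (-(h*y)) ^ (k+1)) * K y := by
        rw [sub_mul _ (∑ k ∈ Finset.range n, c k * (-(h*y)) ^ (k+1)) (K y), Finset.sum_mul]
        congr 1
        apply Finset.sum_congr rfl
        intro k _
        rw [← neg_mul, mul_pow]
        ring
      rw [h1, norm_mul, Real.norm_eq_abs, Real.norm_eq_abs]
      have h2 := hc (-(h*y))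
      rw [ha, abs_neg, abs_mul, abs_of_pos hpos, Real.mul_rpow hpos.le (abs_nonneg y)] at h2
      calc _ ≤ (L * (h ^ a * |y| ^ a)) * |K y| := by gcongr
        _ = _ := by ring)
  refine this.trans (le_of_eq ?_)
  rw [integral_const_mul]
  ring

lemma partial_shift (d : ℕ) (g : (Fin d → ℝ) → ℝ) (i : Fin d) (k : ℕ) (w : Fin d → ℝ) (t : ℝ) :
    partialDerivIter d g i k (w + t • (Pi.single i 1 : Fin d → ℝ)) =
      iteratedDeriv k (fun t : ℝ => g (w + t • (Pi.single i 1 : Fin d → ℝ))) t := by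
  unfold partialDerivIter
  have := iteratedDeriv_comp_const_add k
    (fun t : ℝ => g (w + t • (Pi.single i 1 : Fin d → ℝ))) t
  have h2 := congrFun this 0
  simp only [add_zero] at h2
  rw [← h2]
  simp only [add_smul, add_assoc]

lemma lip_of_deriv_bound (f : ℝ → ℝ) (hf : Differentiable ℝ f) (L : ℝ)
    (hb : ∀ t, |deriv f t| ≤ L) (t : ℝ) : |f t - f 0| ≤ L * |t| := by
  have := Convex.norm_image_sub_le_of_norm_deriv_le (f := f) (s := Set.univ) (x := 0) (y := t)
    (C := L) (fun x _ => hf x) (fun x _ => hb x) convex_univ trivial trivial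
  simpa using this

lemma holder_data (d : ℕ) (α L : Fin d → ℝ) (hα : ∀ i, 0 < α i) (g : (Fin d → ℝ) → ℝ)
    (hg : IsAnisotropicHolder d α L g) (i : Fin d) (w : Fin d → ℝ) :
    (∀ k < ⌈α i⌉₊ - 1, Differentiable ℝ (iteratedDeriv k
          (fun t : ℝ => g (w + t • (Pi.single i 1 : Fin d → ℝ))))) ∧
    ∀ t, |iteratedDeriv (⌈α i⌉₊ - 1) (fun t : ℝ => g (w + t • (Pi.single i 1 : Fin d → ℝ))) t -
      iteratedDeriv (⌈α i⌉₊ - 1) (fun t : ℝ => g (w + t • (Pi.single i 1 : Fin d → ℝ))) 0|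
      ≤ L i * |t| ^ (α i - ((⌈α i⌉₊ - 1 : ℕ) : ℝ)) := by
  obtain ⟨h1, h2, h3⟩ := hg i
  have hle : ⌈α i⌉₊ - 1 ≤ ⌊α i⌋₊ := by
    have := Nat.ceil_le_floor_add_one (α i)
    omega
  refine ⟨fun k hk => h1 w k (by omega), fun t => ?_⟩
  have hc : 0 < ⌈α i⌉₊ := Nat.ceil_pos.2 (hα i)
  have hfc := Nat.floor_le_ceil (α i)
  rcases Nat.lt_or_ge (⌈α i⌉₊ - 1) ⌊α i⌋₊ with hlt | hge
  · have heq : ⌊α i⌋₊ = ⌈α i⌉₊ := by omega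
    have ha : α i = (⌈α i⌉₊ : ℝ) :=
      le_antisymm (Nat.le_ceil _) (heq ▸ Nat.floor_le (hα i).le)
    have hb : α i - ((⌈α i⌉₊ - 1 : ℕ) : ℝ) = 1 := by
      rw [Nat.cast_sub hc]
      push_cast
      linarith
    rw [hb, Real.rpow_one]
    apply lip_of_deriv_bound _ (h1 w _ hlt)
    intro s
    rw [← iteratedDeriv_succ, ← partial_shift]
    exact h2 _ (by omega) _
  · have heq : ⌈α i⌉₊ - 1 = ⌊α i⌋₊ := by omega
    rw [heq, ← partial_shift, ← partial_shift, zero_smul, add_zero]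
    exact h3 t w

/-- The interpolation points for telescoping. -/
def interp (d : ℕ) (x y : Fin d → ℝ) (k : ℕ) : Fin d → ℝ := fun j => if j.val < k then y j else x j

lemma interp_succ (d : ℕ) (x y : Fin d → ℝ) (i : Fin d) :
    interp d x y (i.val + 1) =
      interp d x y i.val + (y i - x i) • (Pi.single i 1 : Fin d → ℝ) := by
  ext j
  simp only [interp, Pi.add_apply, Pi.smul_apply, smul_eq_mul]
  rcases eq_or_ne j i with rfl | hne
  · simp
  · have : j.val ≠ i.val := fun h => hne (Fin.ext h)
    simp only [Pi.single_eq_of_ne hne, mul_zero, add_zero]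
    congr 1
    apply propext
    omega

lemma interp_tele (d : ℕ) (g : (Fin d → ℝ) → ℝ) (x y : Fin d → ℝ) :
    g y - g x = ∑ i : Fin d, (g (interp d x y (i.val + 1)) - g (interp d x y i.val)) := by
  rw [Fin.sum_univ_eq_sum_range (fun k => g (interp d x y (k + 1)) - g (interp d x y k)),
    Finset.sum_range_sub (fun k => g (interp d x y k))]
  congr 2
  · ext j; simp [interp]

lemma holder_continuous (d : ℕ) (α L : Fin d → ℝ) (hα : ∀ i, 0 < α i)
    (g : (Fin d → ℝ) → ℝ)
    (hg : IsAnisotropicHolder d α L g) : Continuous g := by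
  have key : ∀ i, ∃ β > 0, ∀ w t,
      |g (w + t • (Pi.single i 1 : Fin d → ℝ)) - g w| ≤ L i * |t| ^ (β : ℝ) := by
    intro i
    obtain ⟨h1, h2, h3⟩ := hg i
    rcases Nat.eq_zero_or_pos ⌊α i⌋₊ with h0 | hp
    · refine ⟨α i, hα i, fun w t => ?_⟩
      have := h3 t w
      rw [h0] at this
      simpa [partialDerivIter] using this
    · refine ⟨1, one_pos, fun w t => ?_⟩
      have := lip_of_deriv_bound (fun t : ℝ => g (w + t • (Pi.single i 1 : Fin d → ℝ)))
        (by simpa using h1 w 0 hp) (L i) (fun s => by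
          rw [← iteratedDeriv_one, ← partial_shift]
          exact h2 1 hp _) t
      simpa using this
  choose β hβ hb using key
  rw [continuous_iff_continuousAt]
  intro x
  rw [ContinuousAt, tendsto_iff_dist_tendsto_zero]
  have hlim : Filter.Tendsto (fun y : Fin d → ℝ => ∑ i, L i * |y i - x i| ^ (β i)) (nhds x)
      (nhds 0) := by
    have hc : Continuous (fun y : Fin d → ℝ => ∑ i, L i * |y i - x i| ^ (β i)) := by
      refine continuous_finsetSum _ fun i _ => continuous_const.mul ?_
      exact Continuous.rpow_const (by fun_prop) (fun _ => Or.inr (hβ i).le)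
    have := hc.tendsto x
    simpa [Real.zero_rpow (hβ _).ne'] using this
  refine squeeze_zero (fun _ => dist_nonneg) (fun y => ?_) hlim
  rw [Real.dist_eq, interp_tele d g x y]
  refine (Finset.abs_sum_le_sum_abs _ _).trans (Finset.sum_le_sum fun i _ => ?_)
  rw [interp_succ]
  exact hb i _ _

lemma term_bound (n l : ℕ) (α L : Fin (n+1) → ℝ)
    (hα : ∀ i, 0 < α i)
    (K : ℝ → ℝ) (hK : Integrable K)
    (hKsupp : HasCompactSupport K)
    (hKmom : ∀ k : ℕ, 1 ≤ k → k ≤ l - 1 → (∫ y : ℝ, y ^ k * K y) = 0)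
    (hl : ∀ i, ⌈α i⌉₊ ≤ l) (g : (Fin (n+1) → ℝ) → ℝ) (hg : IsAnisotropicHolder (n+1) α L g)
    (x h : Fin (n+1) → ℝ) (hh : ∀ i, 0 < h i) (i : Fin (n+1)) :
    Integrable (fun z : Fin (n+1) → ℝ => (∏ i, K (z i)) *
      (g (interp (n+1) x (fun i => x i - h i * z i) (i.val+1)) -
        g (interp (n+1) x (fun i => x i - h i * z i) i.val))) ∧
    |∫ z : Fin (n+1) → ℝ, (∏ i, K (z i)) *
      (g (interp (n+1) x (fun i => x i - h i * z i) (i.val+1)) -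
        g (interp (n+1) x (fun i => x i - h i * z i) i.val))| ≤
      (∫ z : Fin n → ℝ, ∏ j, |K (z j)|) * ((L i * ∫ y, |y| ^ α i * |K y|) * h i ^ α i) := by
  have hgc := holder_continuous (n+1) α L hα g hg
  have hgb : ∀ w, |g w| ≤ L i := fun w => by
    simpa [partialDerivIter] using (hg i).2.1 0 (Nat.zero_le _) w
  have hic : ∀ k, Continuous (fun z : Fin (n+1) → ℝ =>
      interp (n+1) x (fun i => x i - h i * z i) k) := by
    intro k
    refine continuous_pi fun j => ?_
    unfold interp
    split_ifs <;> fun_prop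
  have hint : Integrable (fun z : Fin (n+1) → ℝ => (∏ i, K (z i)) *
      (g (interp (n+1) x (fun i => x i - h i * z i) (i.val+1)) -
        g (interp (n+1) x (fun i => x i - h i * z i) i.val))) := by
    refine Integrable.mul_bdd (c := L i + L i)
      (Integrable.fintype_prod (f := fun _ => K) (fun _ => hK)) ?_ ?_
    · exact ((hgc.comp (hic _)).sub (hgc.comp (hic _))).aestronglyMeasurable
    · refine Filter.Eventually.of_forall fun z => ?_
      exact (norm_sub_le _ _).trans (add_le_add (hgb _) (hgb _))
  refine ⟨hint, ?_⟩
  have mp := (volume_preserving_piFinSuccAbove (fun _ : Fin (n+1) => ℝ) i).symm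
  rw [← mp.integral_comp (MeasurableEquiv.measurableEmbedding _)]
  have hint2 := (mp.integrable_comp_emb (MeasurableEquiv.measurableEmbedding _)).2 hint
  rw [Measure.volume_eq_prod] at hint2 ⊢
  simp only [Function.comp_def] at hint2
  rw [integral_prod_symm _ hint2, ← Real.norm_eq_abs, ← integral_mul_const]
  refine norm_integral_le_of_norm_le ((Integrable.fintype_prod (f := fun _ y => |K y|)
    (fun _ : Fin n => hK.abs)).mul_const _) (Filter.Eventually.of_forall fun z => ?_)
  set w : Fin (n+1) → ℝ := interp (n+1) x
    (fun j => x j - h j * (i.insertNth (0:ℝ) z : Fin (n+1) → ℝ) j) i.val with hw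
  have hw' : ∀ y : ℝ, interp (n+1) x
    (fun j => x j - h j * (i.insertNth y z : Fin (n+1) → ℝ) j) i.val = w := by
    intro y
    ext j
    simp only [hw, interp]
    split_ifs with hj
    · obtain ⟨k, rfl⟩ := Fin.exists_succAbove_eq (show j ≠ i by rintro rfl; simp at hj)
      simp
    · rfl
  have hval : ∀ y : ℝ, (∏ j, K ((i.insertNth y z : Fin (n+1) → ℝ) j)) *
      (g (interp (n+1) x (fun j => x j - h j * (i.insertNth y z : Fin (n+1) → ℝ) j) (i.val+1)) -
        g (interp (n+1) x (fun j => x j - h j * (i.insertNth y z : Fin (n+1) → ℝ) j) i.val))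
      = (∏ j, K (z j)) * (K y * ((fun t : ℝ => g (w + t • (Pi.single i 1 : Fin (n+1) → ℝ)))
        (-(h i * y)) - (fun t : ℝ => g (w + t • (Pi.single i 1 : Fin (n+1) → ℝ))) 0)) := by
    intro y
    rw [interp_succ, hw', Fin.prod_univ_succAbove _ i]
    simp only [Fin.insertNth_apply_same, Fin.insertNth_apply_succAbove, zero_smul, add_zero]
    rw [show x i - h i * y - x i = -(h i * y) by ring]
    ring
  change ‖∫ y : ℝ, (∏ j, K ((i.insertNth y z : Fin (n+1) → ℝ) j)) *
      (g (interp (n+1) x (fun j => x j - h j * (i.insertNth y z : Fin (n+1) → ℝ) j) (i.val+1)) -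
        g (interp (n+1) x (fun j => x j - h j * (i.insertNth y z : Fin (n+1) → ℝ) j) i.val))‖ ≤ _
  simp only [hval]
  rw [integral_const_mul, norm_mul, norm_prod]
  simp only [Real.norm_eq_abs]
  refine mul_le_mul_of_nonneg_left ?_ (Finset.prod_nonneg fun _ _ => abs_nonneg _)
  obtain ⟨d1, d2⟩ := holder_data (n+1) α L hα g hg i w
  have hc : 0 < ⌈α i⌉₊ := Nat.ceil_pos.2 (hα i)
  refine kernel_one_dim K hK hKsupp (⌈α i⌉₊ - 1)
    (fun k h1 h2 => hKmom k h1 (by have := hl i; omega)) _ (by fun_prop) (L i)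
    (α i - ((⌈α i⌉₊ - 1 : ℕ) : ℝ)) (α i) ?_ (by ring) d1 d2 (h i) (hh i)
  have := Nat.ceil_lt_add_one (hα i).le
  rw [Nat.cast_sub hc]
  push_cast
  linarith

/-- anisotropic kernel bias bound.  For a kernel `K` of order `l`
(with `l ≥ ⌈α_i⌉` for all `i`) and `g` in the anisotropic Hölder class `H_d(α, L)`,
the kernel-smoothing bias is bounded by `C ∑ h_i^{α_i}` with `C` depending only on
`d, α, L, K`. -/
theorem stmt_11 (d l : ℕ) (hd : 1 ≤ d) (α L : Fin d → ℝ)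
    (hα : ∀ i, 0 < α i) (hL : ∀ i, 0 < L i)
    (K : ℝ → ℝ) (hKmeas : Measurable K) (hKbdd : ∃ B : ℝ, ∀ y : ℝ, |K y| ≤ B)
    (hKsupp : HasCompactSupport K)
    (hKint : (∫ y : ℝ, K y) = 1)
    (hKmom : ∀ k : ℕ, 1 ≤ k → k ≤ l - 1 → (∫ y : ℝ, y ^ k * K y) = 0)
    (hl : ∀ i, ⌈α i⌉₊ ≤ l) :
    ∃ C > 0, ∀ g : (Fin d → ℝ) → ℝ, IsAnisotropicHolder d α L g →
      ∀ (x h : Fin d → ℝ), (∀ i, 0 < h i) →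
        |∫ z : Fin d → ℝ, (∏ i : Fin d, K (z i)) *
            (g (fun i => x i - h i * z i) - g x)| ≤
          C * ∑ i : Fin d, h i ^ α i := by
  obtain ⟨n, rfl⟩ : ∃ n, d = n + 1 := ⟨d - 1, by omega⟩
  obtain ⟨B, hB⟩ := hKbdd
  have hK : Integrable K := by
    have h1 : IntegrableOn K (tsupport K) :=
      Measure.integrableOn_of_bounded (M := B) hKsupp.isCompact.measure_lt_top.ne
        hKmeas.aestronglyMeasurable (Filter.Eventually.of_forall fun y => hB y)
    exact (integrableOn_iff_integrable_of_support_subset (subset_tsupport K)).1 h1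
  set M : ℝ := ∫ z : Fin n → ℝ, ∏ j, |K (z j)| with hM
  have hM0 : 0 ≤ M := integral_nonneg fun z => Finset.prod_nonneg fun _ _ => abs_nonneg _
  set A : Fin (n+1) → ℝ := fun i => M * (L i * ∫ y, |y| ^ α i * |K y|) with hA
  have hA0 : ∀ i, 0 ≤ A i := fun i => mul_nonneg hM0 (mul_nonneg (hL i).le
    (integral_nonneg fun y => by positivity))
  have hS0 : 0 ≤ ∑ i, A i := Finset.sum_nonneg fun i _ => hA0 i
  refine ⟨1 + ∑ i, A i, by positivity, fun g hg x h hh => ?_⟩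
  have T := term_bound n l α L hα K hK hKsupp hKmom hl g hg x h hh
  have e : ∀ z : Fin (n+1) → ℝ, (∏ i, K (z i)) * (g (fun i => x i - h i * z i) - g x) =
      ∑ i : Fin (n+1), (∏ i, K (z i)) *
      (g (interp (n+1) x (fun i => x i - h i * z i) (i.val+1)) -
        g (interp (n+1) x (fun i => x i - h i * z i) i.val)) := by
    intro z
    rw [interp_tele, Finset.mul_sum]
  simp only [e]
  rw [integral_finsetSum _ (fun i _ => (T i).1), Finset.mul_sum]
  refine (Finset.abs_sum_le_sum_abs _ _).trans (Finset.sum_le_sum fun i _ => ?_)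
  refine (T i).2.trans ?_
  rw [← mul_assoc]
  refine mul_le_mul_of_nonneg_right ?_ (Real.rpow_nonneg (hh i).le _)
  have := Finset.single_le_sum (f := A) (fun i _ => hA0 i) (Finset.mem_univ i)
  change A i ≤ _
  linarith
end
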